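/- arXiv:2002.00598 — 2 statements merged into one kernel-verified Lean document; each statement's English description precedes it below -/
import Mathlib

section
/- The function γ ↦ F(γ, 0) is monotone increasing on the interval [−1, ∞). -/
open Real intervalIntegral

/-- `σ⁺(γ,x) = 2 − γ²x + √((2−γ²x)² + 4(γ+1)²)`. -/
noncomputable def sigmaPlus (γ x : ℝ) : ℝ :=
  2 - γ ^ 2 * x + Real.sqrt ((2 - γ ^ 2 * x) ^ 2 + 4 * (γ + 1) ^ 2)

/-- `σ⁻(γ,x) = 2 − γ²x − √((2−γ²x)² + 4(γ+1)²)`. -/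
noncomputable def sigmaMinus (γ x : ℝ) : ℝ :=
  2 - γ ^ 2 * x - Real.sqrt ((2 - γ ^ 2 * x) ^ 2 + 4 * (γ + 1) ^ 2)

/-- `F(γ,x) = σ⁺(γ,x) · (∫₀¹ r^{3/2}/√((1−r)(σ⁺ r − σ⁻)) dr) /
    (∫₀¹ r^{1/2}/√((1−r)(σ⁺ r − σ⁻)) dr)`. -/
noncomputable def F (γ x : ℝ) : ℝ :=
  sigmaPlus γ x *
    (∫ r in (0:ℝ)..1, r ^ ((3:ℝ)/2) /
      Real.sqrt ((1 - r) * (sigmaPlus γ x * r - sigmaMinus γ x))) /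
    (∫ r in (0:ℝ)..1, r ^ ((1:ℝ)/2) /
      Real.sqrt ((1 - r) * (sigmaPlus γ x * r - sigmaMinus γ x)))

/-- The lemniscatic constant `ϖ = 2∫₀¹ dt/√(1−t⁴)`. -/
noncomputable def varpi : ℝ := 2 * ∫ t in (0:ℝ)..1, 1 / Real.sqrt (1 - t ^ 4)

/-!
Up to the factor `σ⁺`, the number `F(γ, x)` is the mean of `r` for the density proportional to
`r^{1/2} / √((1 - r)(σ⁺ r - σ⁻))` on `(0, 1)`. The quotient of two such weights is monotone in `r`,
in a direction governed by the ratios `σ⁻ / σ⁺`, so when `σ⁻ / σ⁺` decreases the new density has a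
monotone likelihood ratio with respect to the old one and its mean is larger. At `x = 0` one has
`σ⁺ + σ⁻ = 4`, hence both `σ⁺` and the mean of `r` increase as soon as `σ⁺` does, and `σ⁺` increases
with `γ ≥ -1`.
-/

open MeasureTheory Set

section CompositionFormula

variable {α : Type*} [LinearOrder α] {s : Set α} {f g u v : α → ℝ}

/-- `g / f` is nondecreasing on `s`, with denominators cleared so that zeros of `f` are harmless;
for positive densities this is the monotone likelihood ratio order. -/
def MonotoneRatioOn (f g : α → ℝ) (s : Set α) : Prop :=
  ∀ ⦃x⦄, x ∈ s → ∀ ⦃y⦄, y ∈ s → x ≤ y → f y * g x ≤ f x * g y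

theorem MonotoneRatioOn.mul_det_nonneg (huv : MonotoneRatioOn u v s) (hfg : MonotoneRatioOn f g s)
    {x y : α} (hx : x ∈ s) (hy : y ∈ s) :
    0 ≤ (u x * v y - u y * v x) * (f x * g y - f y * g x) := by
  rcases le_total x y with hxy | hyx
  · exact mul_nonneg (sub_nonneg.2 (huv hx hy hxy)) (sub_nonneg.2 (hfg hx hy hxy))
  · refine mul_nonneg_of_nonpos_of_nonpos (sub_nonpos.2 ?_) (sub_nonpos.2 ?_)
    · linarith [huv hy hx hyx]
    · linarith [hfg hy hx hyx]

-- Integrating the product of two determinants over `s ×ˢ s` gives twice the determinant of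
-- integrals (the Andréief identity).
theorem MonotoneRatioOn.setIntegral_mul_setIntegral_le [MeasurableSpace α] {μ : Measure α}
    [SFinite μ] (huv : MonotoneRatioOn u v s) (hfg : MonotoneRatioOn f g s) (hs : MeasurableSet s)
    (huf : IntegrableOn (fun x => u x * f x) s μ) (hug : IntegrableOn (fun x => u x * g x) s μ)
    (hvf : IntegrableOn (fun x => v x * f x) s μ) (hvg : IntegrableOn (fun x => v x * g x) s μ) :
    (∫ x in s, v x * f x ∂μ) * ∫ x in s, u x * g x ∂μ ≤
      (∫ x in s, u x * f x ∂μ) * ∫ x in s, v x * g x ∂μ := by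
  have pointwise : ∀ᵐ z ∂(μ.restrict s).prod (μ.restrict s),
      v z.1 * f z.1 * (u z.2 * g z.2) + u z.1 * g z.1 * (v z.2 * f z.2) ≤
        u z.1 * f z.1 * (v z.2 * g z.2) + v z.1 * g z.1 * (u z.2 * f z.2) := by
    rw [Measure.prod_restrict]
    filter_upwards [ae_restrict_mem (hs.prod hs)] with z hz
    linarith [huv.mul_det_nonneg hfg hz.1 hz.2]
  have integrated := integral_mono_ae ((hvf.mul_prod hug).add (hug.mul_prod hvf))
    ((huf.mul_prod hvg).add (hvg.mul_prod huf)) pointwise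
  simp only [Pi.add_apply] at integrated
  rw [integral_add (hvf.mul_prod hug) (hug.mul_prod hvf),
    integral_add (huf.mul_prod hvg) (hvg.mul_prod huf)] at integrated
  simp only [integral_prod_mul (fun _ => _ * _) (fun _ => _ * _)] at integrated
  linarith

end CompositionFormula

theorem monotoneRatioOn_rpow {p q : ℝ} (hpq : p ≤ q) :
    MonotoneRatioOn (fun r : ℝ => r ^ p) (fun r => r ^ q) (Ioi 0) := by
  intro x hx y hy hxy
  rw [mem_Ioi] at hx hy
  calc y ^ p * x ^ q = x ^ p * (y ^ p * x ^ (q - p)) := by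
        rw [mul_left_comm, ← rpow_add hx, add_sub_cancel]
    _ ≤ x ^ p * (y ^ p * y ^ (q - p)) := by
        have := rpow_le_rpow hx.le hxy (sub_nonneg.2 hpq)
        gcongr
    _ = x ^ p * y ^ q := by rw [← rpow_add hy, add_sub_cancel]

theorem intervalIntegrable_rpow_mul_one_sub_rpow {p q : ℝ} (hp : -1 < p) (hq : -1 < q) :
    IntervalIntegrable (fun r : ℝ => r ^ p * (1 - r) ^ q) volume 0 1 := by
  have hbeta := (Complex.betaIntegral_convergent (u := (p + 1 : ℝ)) (v := (q + 1 : ℝ))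
    (by rw [Complex.ofReal_re]; linarith) (by rw [Complex.ofReal_re]; linarith)).norm
  refine hbeta.congr_uIoo fun r hr => ?_
  rw [uIoo_of_le zero_le_one] at hr
  simp only [norm_mul, ← Complex.ofReal_one, ← Complex.ofReal_sub, add_sub_cancel_right,
    Complex.norm_cpow_eq_rpow_re_of_pos hr.1, Complex.ofReal_re,
    Complex.norm_cpow_eq_rpow_re_of_pos (sub_pos.2 hr.2)]

/-- The weight `1 / √((1 - r)(a r - b))` occurring in both integrals that define `F`, with
`a = σ⁺` and `b = σ⁻`. -/
noncomputable def ellipticWeight (a b r : ℝ) : ℝ :=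
  (√((1 - r) * (a * r - b)))⁻¹

/-- The moment of real order `p` of `ellipticWeight a b` on `[0, 1]`. -/
noncomputable def ellipticMoment (p a b : ℝ) : ℝ :=
  ∫ r in (0 : ℝ)..1, r ^ p * ellipticWeight a b r

section EllipticMoment

variable {a b c d p q r : ℝ}

theorem one_sub_mul_linear_pos (ha : 0 < a) (hb : b ≤ 0) (hr : r ∈ Ioo (0 : ℝ) 1) :
    0 < (1 - r) * (a * r - b) :=
  mul_pos (sub_pos.2 hr.2) (by linarith [mul_pos ha hr.1])

theorem ellipticWeight_pos (ha : 0 < a) (hb : b ≤ 0) (hr : r ∈ Ioo (0 : ℝ) 1) :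
    0 < ellipticWeight a b r :=
  inv_pos.2 (sqrt_pos.2 (one_sub_mul_linear_pos ha hb hr))

theorem ellipticWeight_le (ha : 0 < a) (hb : b ≤ 0) (hr : r ∈ Ioo (0 : ℝ) 1) :
    ellipticWeight a b r ≤ (√a)⁻¹ * (r ^ (-1 / 2 : ℝ) * (1 - r) ^ (-1 / 2 : ℝ)) := by
  have h1r : 0 < 1 - r := sub_pos.2 hr.2
  calc ellipticWeight a b r ≤ ellipticWeight a 0 r := by
        refine inv_anti₀ (sqrt_pos.2 (one_sub_mul_linear_pos ha le_rfl hr)) (sqrt_le_sqrt ?_)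
        gcongr
    _ = (√a)⁻¹ * (r ^ (-1 / 2 : ℝ) * (1 - r) ^ (-1 / 2 : ℝ)) := by
        rw [ellipticWeight, sub_zero, sqrt_mul h1r.le, sqrt_mul ha.le, neg_div,
          rpow_neg hr.1.le, rpow_neg h1r.le, ← sqrt_eq_rpow, ← sqrt_eq_rpow]
        ring

theorem intervalIntegrable_rpow_mul_ellipticWeight (ha : 0 < a) (hb : b ≤ 0) (hp : -1 / 2 < p) :
    IntervalIntegrable (fun r => r ^ p * ellipticWeight a b r) volume 0 1 := by
  have hbeta := (intervalIntegrable_rpow_mul_one_sub_rpow (p := p - 1 / 2) (q := -1 / 2)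
    (by linarith) (by norm_num)).const_mul (√a)⁻¹
  rw [intervalIntegrable_iff_integrableOn_Ioo_of_le zero_le_one] at hbeta ⊢
  refine hbeta.mono' (by unfold ellipticWeight; fun_prop) ?_
  filter_upwards [ae_restrict_mem measurableSet_Ioo] with r hr
  have hrp : 0 < r ^ p := rpow_pos_of_pos hr.1 p
  rw [norm_of_nonneg (mul_pos hrp (ellipticWeight_pos ha hb hr)).le]
  calc r ^ p * ellipticWeight a b r
      ≤ r ^ p * ((√a)⁻¹ * (r ^ (-1 / 2 : ℝ) * (1 - r) ^ (-1 / 2 : ℝ))) := by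
        gcongr
        exact ellipticWeight_le ha hb hr
    _ = (√a)⁻¹ * (r ^ (p - 1 / 2) * (1 - r) ^ (-1 / 2 : ℝ)) := by
        rw [sub_eq_add_neg p, rpow_add hr.1, neg_div]
        ring

theorem ellipticMoment_pos (ha : 0 < a) (hb : b ≤ 0) (hp : -1 / 2 < p) :
    0 < ellipticMoment p a b :=
  intervalIntegral_pos_of_pos_on (intervalIntegrable_rpow_mul_ellipticWeight ha hb hp)
    (fun _ hr => mul_pos (rpow_pos_of_pos hr.1 p) (ellipticWeight_pos ha hb hr)) zero_lt_one

-- For `x ≤ y` the radicands differ by `(1 - x) * (1 - y) * (y - x) * (c * b - a * d)`.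
theorem monotoneRatioOn_ellipticWeight (ha : 0 < a) (hb : b ≤ 0) (hc : 0 < c) (hd : d ≤ 0)
    (h : a * d ≤ c * b) :
    MonotoneRatioOn (ellipticWeight a b) (ellipticWeight c d) (Ioo 0 1) := by
  intro x hx y hy hxy
  have hax := one_sub_mul_linear_pos ha hb hx
  have hay := one_sub_mul_linear_pos ha hb hy
  have hcy := one_sub_mul_linear_pos hc hd hy
  simp only [ellipticWeight, ← mul_inv, ← sqrt_mul hax.le, ← sqrt_mul hay.le]
  refine inv_anti₀ (sqrt_pos.2 (mul_pos hax hcy)) (sqrt_le_sqrt (sub_nonneg.1 ?_))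
  have h1x : 0 ≤ 1 - x := sub_nonneg.2 hx.2.le
  have h1y : 0 ≤ 1 - y := sub_nonneg.2 hy.2.le
  calc 0 ≤ (1 - x) * (1 - y) * ((y - x) * (c * b - a * d)) :=
        mul_nonneg (mul_nonneg h1x h1y) (mul_nonneg (sub_nonneg.2 hxy) (sub_nonneg.2 h))
    _ = _ := by ring

theorem ellipticMoment_div_le_ellipticMoment_div (ha : 0 < a) (hb : b ≤ 0) (hc : 0 < c)
    (hd : d ≤ 0) (h : a * d ≤ c * b) (hp : -1 / 2 < p) (hpq : p ≤ q) :
    ellipticMoment q a b / ellipticMoment p a b ≤ ellipticMoment q c d / ellipticMoment p c d := by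
  rw [div_le_div_iff₀ (ellipticMoment_pos ha hb hp) (ellipticMoment_pos hc hd hp),
    mul_comm (ellipticMoment q c d)]
  have integrable {e : ℝ} (he : p ≤ e) {a b : ℝ} (ha : 0 < a) (hb : b ≤ 0) :
      IntegrableOn (fun r => r ^ e * ellipticWeight a b r) (Ioo 0 1) :=
    (intervalIntegrable_iff_integrableOn_Ioo_of_le zero_le_one).1
      (intervalIntegrable_rpow_mul_ellipticWeight ha hb (hp.trans_le he))
  have hrpow : MonotoneRatioOn (fun r : ℝ => r ^ p) (fun r => r ^ q) (Ioo 0 1) :=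
    fun _ hx _ hy => monotoneRatioOn_rpow hpq hx.1 hy.1
  simp only [ellipticMoment, integral_of_le zero_le_one, integral_Ioc_eq_integral_Ioo]
  exact hrpow.setIntegral_mul_setIntegral_le (monotoneRatioOn_ellipticWeight ha hb hc hd h)
    measurableSet_Ioo (integrable le_rfl ha hb) (integrable le_rfl hc hd)
    (integrable hpq ha hb) (integrable hpq hc hd)

end EllipticMoment

theorem F_eq_sigmaPlus_mul_ellipticMoment_div (γ x : ℝ) :
    F γ x = sigmaPlus γ x * (ellipticMoment (3 / 2) (sigmaPlus γ x) (sigmaMinus γ x) /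
      ellipticMoment (1 / 2) (sigmaPlus γ x) (sigmaMinus γ x)) := by
  simp only [F, ellipticMoment, ellipticWeight, div_eq_mul_inv, mul_assoc]

theorem sigmaMinus_nonpos (γ x : ℝ) : sigmaMinus γ x ≤ 0 :=
  sub_nonpos.2 (le_sqrt_of_sq_le (le_add_of_nonneg_right (by positivity)))

theorem sigmaPlus_add_sigmaMinus (γ x : ℝ) :
    sigmaPlus γ x + sigmaMinus γ x = 2 * (2 - γ ^ 2 * x) := by
  unfold sigmaPlus sigmaMinus
  ring

theorem sigmaPlus_pos {γ x : ℝ} (h : γ ^ 2 * x < 2) : 0 < sigmaPlus γ x :=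
  add_pos_of_pos_of_nonneg (sub_pos.2 h) (sqrt_nonneg _)

theorem monotoneOn_sigmaPlus_zero : MonotoneOn (fun γ => sigmaPlus γ 0) (Ici (-1)) := by
  intro γ hγ δ _ hγδ
  have hγ' : 0 ≤ γ + 1 := by linarith [mem_Ici.1 hγ]
  simp only [sigmaPlus, mul_zero]
  gcongr

/-- The function `γ ↦ F(γ,0)` is monotone increasing on `[−1,∞)`. -/
theorem statement_5 : MonotoneOn (fun γ => F γ 0) (Set.Ici (-1 : ℝ)) := by
  intro γ hγ δ hδ hγδ
  have hσ : sigmaPlus γ 0 ≤ sigmaPlus δ 0 := monotoneOn_sigmaPlus_zero hγ hδ hγδ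
  have hpos (ε : ℝ) : 0 < sigmaPlus ε 0 := sigmaPlus_pos (by norm_num)
  have hcross : sigmaPlus γ 0 * sigmaMinus δ 0 ≤ sigmaPlus δ 0 * sigmaMinus γ 0 := by
    have hsum (ε : ℝ) : sigmaMinus ε 0 = 4 - sigmaPlus ε 0 := by
      linarith [sigmaPlus_add_sigmaMinus ε 0]
    rw [hsum γ, hsum δ]
    linarith
  simp only [F_eq_sigmaPlus_mul_ellipticMoment_div]
  refine mul_le_mul hσ ?_ ?_ (hpos δ).le
  · exact ellipticMoment_div_le_ellipticMoment_div (hpos γ) (sigmaMinus_nonpos γ 0) (hpos δ)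
      (sigmaMinus_nonpos δ 0) hcross (by norm_num) (by norm_num)
  · exact (div_pos (ellipticMoment_pos (hpos γ) (sigmaMinus_nonpos γ 0) (by norm_num))
      (ellipticMoment_pos (hpos γ) (sigmaMinus_nonpos γ 0) (by norm_num))).le
end

section
/- For μ > 1, setting γ = (1+√μ)/(μ−1), the equality F(γ, 2/γ²) = 2 holds if and only if μ = (3π/(3π − ϖ²))², where ϖ = 2∫₀¹ dt/√(1−t⁴) is the lemniscatic constant. (Physically: the energy constant κ of the unique periodic orbit vanishes exactly for this charge μ of the nucleus.) -/
open Real intervalIntegral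

/-!
At `x = 2/γ²` the term `2 - γ²x` vanishes, so `σ⁺ = -σ⁻ = 2|γ + 1|` and the radicand factors as
`σ⁺ (1 - r²)`. The factor `√σ⁺` cancels from the quotient, leaving the Beta integrals
`∫ r^(3/2) / √(1 - r²) = ϖ/3` and `∫ r^(1/2) / √(1 - r²) = π/ϖ`, hence
`F(γ, 2/γ²) = 2|γ + 1| ϖ² / (3π)`. With `γ = 1/(√μ - 1)` the equation `F = 2` becomes
`√μ (3π - ϖ²) = 3π`, where `3π - ϖ² > 0` because the Beta function decreases in its first argument.
-/

section BetaIntegral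

open ProbabilityTheory

theorem integral_rpow_mul_one_sub_rpow {a b : ℝ} (ha : 0 < a) (hb : 0 < b) :
    ∫ x in (0 : ℝ)..1, x ^ (a - 1) * (1 - x) ^ (b - 1) = beta a b := by
  have complex_eq : Complex.betaIntegral a b =
      ((∫ x in (0 : ℝ)..1, x ^ (a - 1) * (1 - x) ^ (b - 1) : ℝ) : ℂ) := by
    rw [Complex.betaIntegral, ← integral_ofReal]
    refine integral_congr fun x hx ↦ ?_
    rw [Set.uIcc_of_le zero_le_one] at hx
    simp [Complex.ofReal_cpow hx.1, Complex.ofReal_cpow (sub_nonneg.2 hx.2)]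
  rw [beta_eq_betaIntegralReal a b ha hb, complex_eq, Complex.ofReal_re]

theorem intervalIntegrable_rpow_mul_one_sub_rpow_s9 {a b : ℝ} (ha : 0 < a) (hb : 0 < b) :
    IntervalIntegrable (fun x : ℝ ↦ x ^ (a - 1) * (1 - x) ^ (b - 1)) MeasureTheory.volume 0 1 :=
  intervalIntegrable_of_integral_ne_zero <|
    (integral_rpow_mul_one_sub_rpow ha hb).trans_ne (beta_pos ha hb).ne'

theorem beta_lt_beta_of_lt_left {a a' b : ℝ} (ha : 0 < a) (haa' : a < a') (hb : 0 < b) :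
    beta a' b < beta a b := by
  have hint := intervalIntegrable_rpow_mul_one_sub_rpow_s9 ha hb
  have hint' := intervalIntegrable_rpow_mul_one_sub_rpow_s9 (ha.trans haa') hb
  rw [← integral_rpow_mul_one_sub_rpow ha hb, ← integral_rpow_mul_one_sub_rpow (ha.trans haa') hb,
    ← sub_pos, ← integral_sub hint hint']
  refine intervalIntegral_pos_of_pos_on (hint.sub hint') (fun x hx ↦ sub_pos.2 ?_) zero_lt_one
  have : 0 < (1 - x) ^ (b - 1) := rpow_pos_of_pos (sub_pos.2 hx.2) _
  gcongr ?_ * _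
  exact rpow_lt_rpow_of_exponent_gt hx.1 hx.2 (by linarith)

theorem integral_rpow_mul_one_sub_rpow_rpow {a b p : ℝ} (ha : 0 < a) (hb : 0 < b) (hp : 0 < p) :
    ∫ x in (0 : ℝ)..1, x ^ (p * a - 1) * (1 - x ^ p) ^ (b - 1) = beta a b / p := by
  have pos_of_mem {x : ℝ} (hx : x ∈ Set.Ioo (min 0 1) (max 0 1)) : 0 < x := by simpa using hx.1
  have substitution := integral_comp_mul_deriv_of_deriv_nonneg (a := 0) (b := 1)
    (f := fun x : ℝ ↦ x ^ p) (f' := fun x ↦ p * x ^ (p - 1))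
    (g := fun y ↦ y ^ (a - 1) * (1 - y) ^ (b - 1))
    (continuous_rpow_const hp.le).continuousOn
    (fun x hx ↦ hasDerivAt_rpow_const (Or.inl (pos_of_mem hx).ne'))
    (fun x hx ↦ mul_nonneg hp.le (rpow_nonneg (pos_of_mem hx).le _))
  rw [zero_rpow hp.ne', one_rpow, integral_rpow_mul_one_sub_rpow ha hb] at substitution
  rw [eq_div_iff hp.ne', ← substitution, ← integral_mul_const]
  refine integral_congr_uIoo fun x hx ↦ ?_
  have hx0 : 0 < x := pos_of_mem hx
  have exponents : x ^ (p * a - 1) = (x ^ p) ^ (a - 1) * x ^ (p - 1) := by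
    rw [← rpow_mul hx0.le, ← rpow_add hx0]
    ring_nf
  simp only [Function.comp_apply, exponents]
  ring

theorem integral_rpow_div_sqrt_one_sub_rpow {p q : ℝ} (hp : 0 < p) (hq : -1 < q) :
    ∫ x in (0 : ℝ)..1, x ^ q / √(1 - x ^ p) = beta ((q + 1) / p) (1 / 2) / p := by
  rw [← integral_rpow_mul_one_sub_rpow_rpow (div_pos (by linarith) hp) one_half_pos hp]
  refine integral_congr fun x hx ↦ ?_
  rw [Set.uIcc_of_le zero_le_one] at hx
  have hxp : 0 ≤ 1 - x ^ p := sub_nonneg.2 (rpow_le_one hx.1 hx.2 hp.le)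
  have inv_sqrt : (1 - x ^ p) ^ ((1 / 2 : ℝ) - 1) = (√(1 - x ^ p))⁻¹ := by
    rw [sqrt_eq_rpow, ← rpow_neg hxp]
    norm_num
  simp only [inv_sqrt, mul_div_cancel₀ (q + 1) hp.ne', add_sub_cancel_right, ← div_eq_mul_inv]

theorem beta_add_one_left {a b : ℝ} (ha : a ≠ 0) (hab : a + b ≠ 0) :
    beta (a + 1) b = a / (a + b) * beta a b := by
  rw [beta, beta, add_right_comm, Gamma_add_one ha, Gamma_add_one hab, mul_assoc, mul_div_mul_comm]

theorem beta_one_half_mul_beta_add_one_half {a : ℝ} (ha : 0 < a) :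
    beta a (1 / 2) * beta (a + 1 / 2) (1 / 2) = π / a := by
  have : Gamma a ≠ 0 := (Gamma_pos_of_pos ha).ne'
  have : Gamma (a + 1 / 2) ≠ 0 := (Gamma_pos_of_pos (by positivity)).ne'
  rw [beta, beta, add_assoc, add_halves, Gamma_add_one ha.ne', Gamma_one_half_eq]
  field_simp
  exact sq_sqrt pi_pos.le

end BetaIntegral

section Lemniscate

open ProbabilityTheory

theorem varpi_eq_beta : varpi = beta (1 / 4) (1 / 2) / 2 := by
  have h := integral_rpow_div_sqrt_one_sub_rpow (p := 4) (q := 0) (by norm_num) (by norm_num)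
  simp only [rpow_zero, rpow_ofNat, zero_add] at h
  rw [varpi, h]
  ring

theorem varpi_pos : 0 < varpi := by
  rw [varpi_eq_beta]
  exact half_pos (beta_pos (by norm_num) (by norm_num))

theorem beta_five_quarters_half : beta (5 / 4) (1 / 2) = 2 * varpi / 3 := by
  rw [show (5 / 4 : ℝ) = 1 / 4 + 1 by norm_num, beta_add_one_left (by norm_num) (by norm_num),
    varpi_eq_beta]
  ring

theorem beta_three_quarters_half : beta (3 / 4) (1 / 2) = 2 * π / varpi := by
  have h : beta (1 / 4) (1 / 2) * beta (1 / 4 + 1 / 2) (1 / 2) = π / (1 / 4) :=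
    beta_one_half_mul_beta_add_one_half (by norm_num)
  rw [show (1 / 4 + 1 / 2 : ℝ) = 3 / 4 by norm_num] at h
  rw [eq_div_iff varpi_pos.ne', varpi_eq_beta]
  linarith

theorem varpi_sq_lt : varpi ^ 2 < 3 * π := by
  have h : beta (5 / 4) (1 / 2) < beta (3 / 4) (1 / 2) :=
    beta_lt_beta_of_lt_left (by norm_num) (by norm_num) (by norm_num)
  rw [beta_five_quarters_half, beta_three_quarters_half,
    div_lt_div_iff₀ three_pos varpi_pos] at h
  linarith

theorem integral_rpow_three_halves_div_sqrt_one_sub_sq :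
    ∫ r in (0 : ℝ)..1, r ^ (3 / 2 : ℝ) / √(1 - r ^ 2) = varpi / 3 := by
  have h := integral_rpow_div_sqrt_one_sub_rpow (p := 2) (q := 3 / 2) two_pos (by norm_num)
  norm_num only [rpow_ofNat, beta_five_quarters_half] at h
  rw [h]
  ring

theorem integral_rpow_half_div_sqrt_one_sub_sq :
    ∫ r in (0 : ℝ)..1, r ^ (1 / 2 : ℝ) / √(1 - r ^ 2) = π / varpi := by
  have h := integral_rpow_div_sqrt_one_sub_rpow (p := 2) (q := 1 / 2) two_pos (by norm_num)
  norm_num only [rpow_ofNat, beta_three_quarters_half] at h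
  rw [h]
  ring

end Lemniscate

theorem sqrt_four_mul_sq (x : ℝ) : √(4 * x ^ 2) = 2 * |x| := by
  rw [show 4 * x ^ 2 = (2 * x) ^ 2 by ring, sqrt_sq_eq_abs, abs_mul, abs_two]

theorem sigmaPlus_two_div_sq {γ : ℝ} (hγ : γ ≠ 0) : sigmaPlus γ (2 / γ ^ 2) = 2 * |γ + 1| := by
  rw [sigmaPlus, mul_div_cancel₀ 2 (pow_ne_zero 2 hγ), sub_self, zero_pow two_ne_zero, zero_add,
    zero_add, sqrt_four_mul_sq]

theorem sigmaMinus_two_div_sq {γ : ℝ} (hγ : γ ≠ 0) :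
    sigmaMinus γ (2 / γ ^ 2) = -(2 * |γ + 1|) := by
  rw [sigmaMinus, mul_div_cancel₀ 2 (pow_ne_zero 2 hγ), sub_self, zero_pow two_ne_zero, zero_add,
    zero_sub, sqrt_four_mul_sq]

-- The shape `c * r - -c` is that of the radicand in `F` when `σ⁻ = -σ⁺`.
theorem integral_div_sqrt_one_sub_mul_sub_neg {c : ℝ} (hc : 0 ≤ c) (f : ℝ → ℝ) (a b : ℝ) :
    ∫ r in a..b, f r / √((1 - r) * (c * r - -c)) = (∫ r in a..b, f r / √(1 - r ^ 2)) / √c := by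
  have factor (r : ℝ) : (1 - r) * (c * r - -c) = c * (1 - r ^ 2) := by ring
  simp only [← integral_div, factor, sqrt_mul hc, div_div, mul_comm]

theorem F_two_div_sq {γ : ℝ} (hγ : γ ≠ 0) (hγ1 : γ + 1 ≠ 0) :
    F γ (2 / γ ^ 2) = 2 * |γ + 1| * varpi ^ 2 / (3 * π) := by
  have hσ : 0 < 2 * |γ + 1| := by positivity
  have hsqrt : √(2 * |γ + 1|) ≠ 0 := (sqrt_pos.2 hσ).ne'
  have hϖ : varpi ≠ 0 := varpi_pos.ne'
  rw [F, sigmaPlus_two_div_sq hγ, sigmaMinus_two_div_sq hγ,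
    integral_div_sqrt_one_sub_mul_sub_neg hσ.le, integral_div_sqrt_one_sub_mul_sub_neg hσ.le,
    integral_rpow_three_halves_div_sqrt_one_sub_sq, integral_rpow_half_div_sqrt_one_sub_sq]
  field_simp

theorem one_add_sqrt_div_sub_one {μ : ℝ} (hμ : 0 ≤ μ) : (1 + √μ) / (μ - 1) = 1 / (√μ - 1) := by
  have factor : μ - 1 = (1 + √μ) * (√μ - 1) := by
    linear_combination -sq_sqrt hμ
  have : 1 + √μ ≠ 0 := by positivity
  rw [factor]
  field_simp

/-- For `μ > 1` with `γ = (1+√μ)/(μ−1)`, `F(γ, 2/γ²) = 2` iff `μ = (3π/(3π−ϖ²))²`. -/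
theorem statement_9 (μ : ℝ) (hμ : 1 < μ) :
    F ((1 + Real.sqrt μ) / (μ - 1)) (2 / ((1 + Real.sqrt μ) / (μ - 1)) ^ 2) = 2 ↔
      μ = (3 * π / (3 * π - varpi ^ 2)) ^ 2 := by
  have hs : 1 < √μ := by rwa [lt_sqrt zero_le_one, one_pow]
  have hs1 : 0 < √μ - 1 := sub_pos.2 hs
  have hD : 0 < 3 * π - varpi ^ 2 := sub_pos.2 varpi_sq_lt
  have hγ : 1 / (√μ - 1) + 1 = √μ / (√μ - 1) := by field_simp; ring
  have hγ_pos : 0 < √μ / (√μ - 1) := by positivity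
  calc F ((1 + √μ) / (μ - 1)) (2 / ((1 + √μ) / (μ - 1)) ^ 2) = 2
      ↔ 2 * (√μ / (√μ - 1)) * varpi ^ 2 / (3 * π) = 2 := by
        rw [one_add_sqrt_div_sub_one (by linarith),
          F_two_div_sq (by positivity) (by positivity), hγ, abs_of_pos hγ_pos]
    _ ↔ √μ * (3 * π - varpi ^ 2) = 3 * π := by
        field_simp
        constructor <;> intro h <;> linarith
    _ ↔ √μ = 3 * π / (3 * π - varpi ^ 2) := (eq_div_iff hD.ne').symm
    _ ↔ μ = (3 * π / (3 * π - varpi ^ 2)) ^ 2 := sqrt_eq_iff_eq_sq (by linarith) (by positivity)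
end
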